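/- The two standard charts U₁ and U₂ of the blow-up of 𝔸³ at the origin intersect the strict transform of {z^p + h(x,y) = 0} (with h degree-q homogeneous without multiple factors, p > q coprime to q, x ∤ h, y ∤ h) in smooth surfaces: U₁ ∩ S = {z₁^p x₁^{p−q} + h(1,y₁) = 0} and U₂ ∩ S = {z₂^p y₂^{p−q} + h(x₂,1) = 0} are smooth. -/

import Mathlib

open MvPolynomial

lemma aux_dvd {K : Type*} [Field K] {q : ℕ} {f : MvPolynomial (Fin 2) K}
    (hf : f.IsHomogeneous q) (i j : Fin 2) (hij : ∀ k, k = i ∨ k = j) (c : Fin 2 → K)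
    (hci : c i = 1) (h0 : eval c f = 0) :
    (X j - C (c j) * X i : MvPolynomial (Fin 2) K) ∣ f := by
  have h1 : aeval (fun k => X i * C (c k) : Fin 2 → MvPolynomial (Fin 2) K) f = 0 := by
    have : aeval (fun k => X i * C (c k) : Fin 2 → MvPolynomial (Fin 2) K) f
        = X i ^ q * C (eval c f) := by
      rw [aeval_def, eval₂_eq, eval_eq, map_sum, Finset.mul_sum]
      refine Finset.sum_congr rfl fun m hm => ?_
      have hd : ∑ k ∈ m.support, m k = q := by
        have := hf (mem_support_iff.mp hm)
        simpa [Finsupp.weight_apply, Finsupp.sum] using this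
      simp only [mul_pow, Finset.prod_mul_distrib, Finset.prod_pow_eq_pow_sum, hd, map_mul,
        map_prod, map_pow, algebraMap_eq]
      ring
    rw [this, h0]; simp
  rw [← Ideal.mem_span_singleton, ← Ideal.Quotient.eq_zero_iff_mem]
  set I := Ideal.span {(X j - C (c j) * X i : MvPolynomial (Fin 2) K)}
  have h2 : (Ideal.Quotient.mkₐ K I) = (Ideal.Quotient.mkₐ K I).comp
      (aeval (fun k => X i * C (c k) : Fin 2 → MvPolynomial (Fin 2) K)) := by
    ext k
    simp only [AlgHom.comp_apply, aeval_X, Ideal.Quotient.mkₐ_eq_mk]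
    rw [Ideal.Quotient.eq]
    rcases hij k with rfl | rfl
    · simp [hci]
    · rw [mul_comm]; exact Ideal.mem_span_singleton_self _
  have h3 := congrArg (fun g => g f) h2
  simp only [AlgHom.comp_apply, h1, map_zero, Ideal.Quotient.mkₐ_eq_mk] at h3
  exact h3

lemma aux_key {K : Type*} [Field K] {q : ℕ} {h : MvPolynomial (Fin 2) K}
    (hhom : h.IsHomogeneous q) (hsf : Squarefree h) (i j : Fin 2) (hne : i ≠ j)
    (hij : ∀ k, k = i ∨ k = j) (c : Fin 2 → K)
    (hci : c i = 1) (h0 : eval c h = 0) (h1 : eval c (pderiv j h) = 0) : False := by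
  obtain ⟨k, hk⟩ := aux_dvd hhom i j hij c hci h0
  have hd := aux_dvd (hhom.pderiv (i := j)) i j hij c hci h1
  set L := (X j - C (c j) * X i : MvPolynomial (Fin 2) K) with hL
  have hLd : pderiv j L = 1 := by
    simp [hL, pderiv_X_of_ne hne, pderiv_X_self]
  have hLk : L ∣ k := by
    rw [hk, Derivation.leibniz, hLd] at hd
    simp only [smul_eq_mul, mul_one] at hd
    exact (dvd_add_right (Dvd.intro _ rfl)).mp hd
  have hu : IsUnit L := hsf L (by rw [hk]; exact mul_dvd_mul_left L hLk)
  have hu2 := hu.map (eval c)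
  simp [hL, hci] at hu2

lemma aux_chain {K : Type*} [Field K] (s : Fin 2 → MvPolynomial (Fin 3) K) (j : Fin 2)
    (j' : Fin 3) (hs : ∀ k, pderiv j' (s k) = aeval s (pderiv j (X k : MvPolynomial (Fin 2) K)))
    (h : MvPolynomial (Fin 2) K) :
    pderiv j' (aeval s h) = aeval s (pderiv j h) := by
  induction h using MvPolynomial.induction_on with
  | C a => simp [← algebraMap_eq]
  | add f g hf hg => simp only [map_add, hf, hg]
  | mul_X f n hf =>
    simp only [map_mul, Derivation.leibniz, smul_eq_mul, map_add, hf, hs, aeval_X]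

lemma aux_const {K : Type*} [Field K] (s : Fin 2 → MvPolynomial (Fin 3) K)
    (j' : Fin 3) (hs : ∀ k, pderiv j' (s k) = 0) (h : MvPolynomial (Fin 2) K) :
    pderiv j' (aeval s h) = 0 := by
  induction h using MvPolynomial.induction_on with
  | C a => simp [← algebraMap_eq]
  | add f g hf hg => simp only [map_add, hf, hg, add_zero]
  | mul_X f n hf => simp only [map_mul, Derivation.leibniz, hf, hs, aeval_X, smul_zero, add_zero]

lemma aux_chart {K : Type*} [Field K] [CharZero K] {p q r : ℕ} (hr : r ≠ 0) (hp : p ≠ 0)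
    {h : MvPolynomial (Fin 2) K} (hhom : h.IsHomogeneous q) (hsf : Squarefree h)
    (s : Fin 2 → MvPolynomial (Fin 3) K) (i j : Fin 2) (i' j' : Fin 3) (hne : i ≠ j)
    (hij : ∀ k, k = i ∨ k = j) (hi : s i = 1) (hj : s j = X j')
    (hi2 : i' ≠ 2) (hj2 : j' ≠ 2) (hij' : i' ≠ j') (a : Fin 3 → K)
    (h0 : eval a ((X 2 : MvPolynomial (Fin 3) K) ^ p * (X i') ^ r + aeval s h) = 0) :
    ∃ l : Fin 3, eval a (pderiv l ((X 2 : MvPolynomial (Fin 3) K) ^ p * (X i') ^ r +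
      aeval s h)) ≠ 0 := by
  by_contra! hc
  have hz := hc 2
  have hy := hc j'
  rw [map_add, aux_const s 2 (by
    intro k
    rcases hij k with rfl | rfl
    · simp [hi]
    · rw [hj, pderiv_X_of_ne hj2])] at hz
  rw [map_add, aux_chain s j j' (by
    intro k
    rcases hij k with rfl | rfl
    · simp [hi, pderiv_X_of_ne hne]
    · simp [hj, pderiv_X_self])] at hy
  have hev : ∀ f : MvPolynomial (Fin 2) K, eval a (aeval s f) = eval (fun k => eval a (s k)) f := by
    intro f
    induction f using MvPolynomial.induction_on with
    | C a => simp [← algebraMap_eq]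
    | add f g hf hg => simp only [map_add, hf, hg]
    | mul_X f n hf => simp only [map_mul, hf, aeval_X, eval_X]
  simp [Derivation.leibniz, Derivation.leibniz_pow, pderiv_X_of_ne hi2, pderiv_X_self, hp] at hz
  simp [Derivation.leibniz, Derivation.leibniz_pow, pderiv_X_of_ne hij', pderiv_X_of_ne hj2.symm,
    -aeval_eq_bind₁, hev] at hy
  have h3 : eval (fun k => eval a (s k)) h = 0 := by
    simp only [map_add, map_mul, map_pow, eval_X, hev] at h0
    rcases hz with hz | hz
    · simpa [hz, hr] using h0
    · simpa [hz, hp] using h0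
  exact aux_key hhom hsf i j hne hij _ (by simp [hi]) h3 hy

/-- The strict transforms of {z^p + h(x,y) = 0} in the first two charts of the blow-up
of 𝔸³ at the origin, namely {z₁^p x₁^{p−q} + h(1,y₁) = 0} and
{z₂^p y₂^{p−q} + h(x₂,1) = 0}, are smooth (Jacobian criterion). -/
theorem stmt_8 {K : Type*} [Field K] [IsAlgClosed K] [CharZero K]
    (p q : ℕ) (hq : 2 ≤ q) (hpq : q < p) (hcop : Nat.Coprime p q)
    (h : MvPolynomial (Fin 2) K) (hhom : h.IsHomogeneous q) (hsf : Squarefree h)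
    (hx : ¬ (X 0 : MvPolynomial (Fin 2) K) ∣ h)
    (hy : ¬ (X 1 : MvPolynomial (Fin 2) K) ∣ h) :
    (∀ a : Fin 3 → K,
        eval a ((X 2 : MvPolynomial (Fin 3) K) ^ p * (X 0) ^ (p - q) +
          aeval (fun i : Fin 2 => if i = 0 then 1 else (X 1 : MvPolynomial (Fin 3) K)) h) = 0 →
        ∃ i : Fin 3, eval a (pderiv i ((X 2 : MvPolynomial (Fin 3) K) ^ p * (X 0) ^ (p - q) +
          aeval (fun i : Fin 2 => if i = 0 then 1 else (X 1 : MvPolynomial (Fin 3) K)) h)) ≠ 0) ∧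
    (∀ a : Fin 3 → K,
        eval a ((X 2 : MvPolynomial (Fin 3) K) ^ p * (X 1) ^ (p - q) +
          aeval (fun i : Fin 2 => if i = 0 then (X 0 : MvPolynomial (Fin 3) K) else 1) h) = 0 →
        ∃ i : Fin 3, eval a (pderiv i ((X 2 : MvPolynomial (Fin 3) K) ^ p * (X 1) ^ (p - q) +
          aeval (fun i : Fin 2 => if i = 0 then (X 0 : MvPolynomial (Fin 3) K) else 1) h)) ≠ 0) := by
  constructor
  · intro a h0
    exact aux_chart (by omega) (by omega) hhom hsf _ 0 1 0 1 (by decide) (by decide) (by simp)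
      (by simp) (by decide) (by decide) (by decide) a h0
  · intro a h0
    exact aux_chart (by omega) (by omega) hhom hsf _ 1 0 1 0 (by decide) (by decide) (by simp)
      (by simp) (by decide) (by decide) (by decide) a h0
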